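/- Let F be a field and L ⊇ F an algebraic field extension. Let h ∈ L[x₁,…,x_d] be nonconstant and irreducible in L[x₁,…,x_d]. Then there exists h_m ∈ F[x₁,…,x_d] such that: (1) h divides h_m in L[x₁,…,x_d]; and (2) for every f ∈ F[x₁,…,x_d], if h divides f in L[x₁,…,x_d] then h_m divides f in F[x₁,…,x_d]. Equivalently, the ideal ⟨h⟩ ∩ F[x₁,…,x_d] of F[x₁,…,x_d] is a nonzero principal ideal. -/

import Mathlib

/-!
Let `c` be the constant coefficient of the minimal polynomial of `h` over `A = F[x₁,…,x_d]`, of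
degree `n`. Up to sign, `c` is the norm of `h` from `Frac A (h)` to `Frac A`. Clearly `h ∣ c`.
Conversely, if `f ∈ A` and `f = h * k`, then `k` is integral over the normal domain `A`, so its
norm lies in `A`, and multiplicativity of the norm gives `c ∣ f ^ n`. The prime ideal `⟨h⟩ ∩ A` is
nonzero, so it contains a prime `p` of the factorial ring `A`. Now `c` is a nonunit dividing
`p ^ n`, hence `p ∣ c ∣ f ^ n` and so `p ∣ f` for every `f ∈ ⟨h⟩ ∩ A`.
-/

section Field

open IntermediateField

variable {A K : Type*} [CommRing A] [IsDomain A] [IsIntegrallyClosed A] [Field K] [Algebra A K]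
  [IsFractionRing A K]

theorem coeff_zero_minpoly_gen_dvd_pow {E : Type*} [Field E] [Algebra K E] [Algebra A E]
    [IsScalarTower A K E] (pb : PowerBasis K E) {y : E} {a : A}
    (hgen : IsIntegral A pb.gen) (hy : IsIntegral A y) (hmul : pb.gen * y = algebraMap A E a) :
    (minpoly A pb.gen).coeff 0 ∣ a ^ pb.dim := by
  obtain ⟨b, hb⟩ := IsIntegrallyClosed.isIntegral_iff.1 (Algebra.isIntegral_norm K hy)
  have hnorm : Algebra.norm K pb.gen =
      algebraMap A K ((-1) ^ pb.dim * (minpoly A pb.gen).coeff 0) := by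
    rw [Algebra.PowerBasis.norm_gen_eq_coeff_zero_minpoly,
      minpoly.isIntegrallyClosed_eq_field_fractions' K hgen, Polynomial.coeff_map]
    simp only [map_mul, map_pow, map_neg, map_one]
  have hprod : (-1) ^ pb.dim * (minpoly A pb.gen).coeff 0 * b = a ^ pb.dim := by
    apply IsFractionRing.injective A K
    rw [map_mul, ← hnorm, hb, ← map_mul, hmul, IsScalarTower.algebraMap_apply A K E,
      Algebra.norm_algebraMap_of_basis pb.basis, Fintype.card_fin, map_pow]
  exact ⟨(-1) ^ pb.dim * b, by rw [← hprod]; ring⟩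

variable (K) in
theorem coeff_zero_minpoly_dvd_pow_of_isFractionRing {L : Type*} [Field L] [Algebra K L]
    [Algebra A L] [IsScalarTower A K L] {x y : L} {a : A}
    (hx : IsIntegral A x) (hy : IsIntegral A y) (hx₀ : x ≠ 0) (hmul : x * y = algebraMap A L a) :
    (minpoly A x).coeff 0 ∣ a ^ (minpoly A x).natDegree := by
  have hxK : IsIntegral K x := hx.tower_top
  have hy_mem : y ∈ K⟮x⟯ := by
    rw [eq_div_of_mul_eq hx₀ ((mul_comm y x).trans hmul), IsScalarTower.algebraMap_apply A K L]
    exact div_mem (K⟮x⟯.algebraMap_mem _) (mem_adjoin_simple_self K x)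
  have : IsScalarTower A K⟮x⟯ L := .of_algebraMap_eq fun _ => rfl
  have hinj : Function.Injective (algebraMap K⟮x⟯ L) := (algebraMap K⟮x⟯ L).injective
  let pb := adjoin.powerBasis hxK
  have hgen : algebraMap K⟮x⟯ L pb.gen = x := by
    rw [adjoin.powerBasis_gen, AdjoinSimple.algebraMap_gen]
  have hmin : minpoly A pb.gen = minpoly A x := by
    rw [← minpoly.algebraMap_eq hinj, hgen]
  have hdim : pb.dim = (minpoly A x).natDegree := by
    rw [adjoin.powerBasis_dim, minpoly.isIntegrallyClosed_eq_field_fractions' K hx,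
      (minpoly.monic hx).natDegree_map]
  rw [← hdim, ← hmin]
  refine coeff_zero_minpoly_gen_dvd_pow pb (y := ⟨y, hy_mem⟩) ?_ ?_ (hinj ?_)
  · rwa [← isIntegral_algebraMap_iff hinj, hgen]
  · rwa [← isIntegral_algebraMap_iff hinj]
  · rwa [map_mul, hgen]

end Field

theorem dvd_algebraMap_coeff_zero_minpoly (A : Type*) {B : Type*} [CommRing A] [CommRing B]
    [Algebra A B] (x : B) : x ∣ algebraMap A B ((minpoly A x).coeff 0) :=
  Ideal.mem_span_singleton.1 <|
    Ideal.coeff_zero_mem_comap_of_root_mem (Ideal.mem_span_singleton_self x) (minpoly.aeval A x)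

section Domain

variable {A B : Type*} [CommRing A] [IsDomain A] [CommRing B] [IsDomain B] [Algebra A B]
  [FaithfulSMul A B]

theorem coeff_zero_minpoly_dvd_pow [IsIntegrallyClosed A] {x y : B} {a : A}
    (hx : IsIntegral A x) (hy : IsIntegral A y) (hx₀ : x ≠ 0) (hmul : x * y = algebraMap A B a) :
    (minpoly A x).coeff 0 ∣ a ^ (minpoly A x).natDegree := by
  let _ : Algebra (FractionRing A) (FractionRing B) := FractionRing.liftAlgebra A (FractionRing B)
  have hinj : Function.Injective (algebraMap B (FractionRing B)) := IsFractionRing.injective _ _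
  rw [← minpoly.algebraMap_eq hinj x]
  refine coeff_zero_minpoly_dvd_pow_of_isFractionRing (FractionRing A) hx.algebraMap hy.algebraMap
    ((map_ne_zero_iff _ hinj).2 hx₀) ?_
  rw [← map_mul, hmul, ← IsScalarTower.algebraMap_apply]

theorem exists_prime_forall_dvd_algebraMap_iff [UniqueFactorizationMonoid A]
    [Algebra.IsIntegral A B] {h : B} (hh : Prime h) :
    ∃ p : A, Prime p ∧ ∀ a : A, h ∣ algebraMap A B a ↔ p ∣ a := by
  have hint (b : B) : IsIntegral A b := Algebra.IsIntegral.isIntegral b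
  have hspan : (Ideal.span {h}).IsPrime := (Ideal.span_singleton_prime hh.ne_zero).2 hh
  have hne : (Ideal.span {h}).under A ≠ ⊥ :=
    Ideal.comap_ne_bot_of_integral_mem hh.ne_zero (Ideal.mem_span_singleton_self h) (hint h)
  obtain ⟨p, hp_mem, hp⟩ := (hspan.under A).exists_mem_prime_of_ne_bot hne
  have hhp : h ∣ algebraMap A B p := Ideal.mem_span_singleton.1 hp_mem
  let c := (minpoly A h).coeff 0
  have hc_dvd {a : A} (ha : h ∣ algebraMap A B a) : c ∣ a ^ (minpoly A h).natDegree := by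
    obtain ⟨k, hk⟩ := ha
    exact coeff_zero_minpoly_dvd_pow (hint h) (hint k) hh.ne_zero hk.symm
  have hc_unit : ¬IsUnit c := fun hu =>
    hh.not_isUnit <| isUnit_of_dvd_unit (dvd_algebraMap_coeff_zero_minpoly A h) (hu.map _)
  have hpc : p ∣ c := by
    by_contra hp_ndvd
    have hrel : IsRelPrime p c := hp.irreducible.isRelPrime_iff_not_dvd.2 hp_ndvd
    exact hc_unit (hrel.pow_left (hc_dvd hhp) dvd_rfl)
  exact ⟨p, hp, fun a => ⟨fun ha => hp.dvd_of_dvd_pow (hpc.trans (hc_dvd ha)),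
    fun hpa => hhp.trans (map_dvd _ hpa)⟩⟩

end Domain

attribute [local instance] MvPolynomial.algebraMvPolynomial in
theorem exists_minimal_polynomial_factor_general {σ R S : Type*} [CommRing R] [IsDomain R]
    [UniqueFactorizationMonoid R] [CommRing S] [IsDomain S] [Algebra R S] [FaithfulSMul R S]
    [Algebra.IsIntegral R S] {h : MvPolynomial σ S} (hh : Prime h) :
    ∃ hm : MvPolynomial σ R, Prime hm ∧
      ∀ f : MvPolynomial σ R, h ∣ MvPolynomial.map (algebraMap R S) f ↔ hm ∣ f :=
  exists_prime_forall_dvd_algebraMap_iff hh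

/-- Let `L ⊇ F` be an algebraic field extension and let
`h ∈ L[x₁,…,x_d]` be nonconstant and irreducible. Then there exists a nonzero
`h_m ∈ F[x₁,…,x_d]` such that `h ∣ h_m` in `L[x₁,…,x_d]` and every `f ∈ F[x₁,…,x_d]`
divisible by `h` in `L[x₁,…,x_d]` is divisible by `h_m` in `F[x₁,…,x_d]`
(i.e. `⟨h⟩ ∩ F[x₁,…,x_d]` is a nonzero principal ideal). -/
theorem exists_minimal_polynomial_factor (F L : Type*) [Field F] [Field L]
    [Algebra F L] [Algebra.IsAlgebraic F L] (d : ℕ)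
    (h : MvPolynomial (Fin d) L) (hconst : 0 < h.totalDegree) (hirr : Irreducible h) :
    ∃ hm : MvPolynomial (Fin d) F,
      hm ≠ 0 ∧
      h ∣ MvPolynomial.map (algebraMap F L) hm ∧
      ∀ f : MvPolynomial (Fin d) F,
        h ∣ MvPolynomial.map (algebraMap F L) f → hm ∣ f := by
  obtain ⟨hm, hm_prime, hm_dvd⟩ := exists_minimal_polynomial_factor_general (R := F) hirr.prime
  exact ⟨hm, hm_prime.ne_zero, (hm_dvd hm).2 dvd_rfl, fun f => (hm_dvd f).1⟩
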